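/- For all nonnegative integers m_1, m_2 and every integer k, the product of Gaussian coefficients satisfies [m_1+m_2+1 choose m_1+k] · [m_1+m_2+1 choose m_2+k] = Σ_{t=0}^{m_1-k+1} q^{t^2 + 2kt - t} · (q;q)_{m_1+m_2+1} / ((q;q)_t (q;q)_{t+2k-1} (q;q)_{m_1-k-t+1} (q;q)_{m_2-k-t+1}), where any summand containing a factor 1/(q;q)_u with u < 0 is interpreted as 0. -/

import Mathlib

open Finset

noncomputable section

/-- The variable `q`, as a rational function over `ℚ`. -/
def q : RatFunc ℚ := RatFunc.X

/-- The `q`-integer `[n] = (1 - q^n)/(1 - q)`. -/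
def qint (n : ℕ) : RatFunc ℚ := (1 - q ^ n) / (1 - q)

/-- The `q`-factorial `[n]! = [1][2]⋯[n]`, with `[0]! = 1`. -/
def qfact (n : ℕ) : RatFunc ℚ := ∏ i ∈ Finset.range n, qint (i + 1)

/-- The Gaussian (q-binomial) coefficient `[N choose K]`, equal to
`[N]!/([K]![N-K]!)` if `0 ≤ K ≤ N`, and `0` otherwise. -/
def qbinom (N K : ℤ) : RatFunc ℚ :=
  if 0 ≤ K ∧ K ≤ N then qfact N.toNat / (qfact K.toNat * qfact (N - K).toNat) else 0

/-- The `q`-Pochhammer symbol `(q;q)_n = (1-q)(1-q²)⋯(1-qⁿ)`, with `(q;q)_0 = 1`. -/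
def qpoch (n : ℕ) : RatFunc ℚ := ∏ i ∈ Finset.range n, (1 - q ^ (i + 1))

/-- The reciprocal `1/(q;q)_u` for an integer `u`, with the convention
`1/(q;q)_u = 0` when `u < 0`. -/
def qpochInv (u : ℤ) : RatFunc ℚ := if 0 ≤ u then (qpoch u.toNat)⁻¹ else 0

lemma q_ne_zero : q ≠ 0 := RatFunc.X_ne_zero

lemma one_sub_q_pow_ne_zero (n : ℕ) : 1 - q ^ (n + 1) ≠ 0 := by
  intro h
  have hX : (Polynomial.X : Polynomial ℚ) ^ (n + 1) = 1 := by
    apply RatFunc.algebraMap_injective ℚ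
    rw [map_pow, RatFunc.algebraMap_X, map_one]
    exact (sub_eq_zero.mp h).symm
  have hdeg := congrArg Polynomial.natDegree hX
  simp at hdeg

lemma qpoch_ne_zero (n : ℕ) : qpoch n ≠ 0 :=
  Finset.prod_ne_zero_iff.mpr fun i _ => one_sub_q_pow_ne_zero i

lemma qpoch_succ (n : ℕ) : qpoch (n + 1) = qpoch n * (1 - q ^ (n + 1)) :=
  Finset.prod_range_succ _ _

lemma qfact_eq_qpoch_div (n : ℕ) : qfact n = qpoch n / (1 - q) ^ n := by
  simp [qfact, qpoch, qint, Finset.prod_div_distrib]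

lemma qpochInv_natCast (n : ℕ) : qpochInv (n : ℤ) = (qpoch n)⁻¹ := by
  simp [qpochInv]

lemma qpochInv_zero : qpochInv 0 = 1 := by
  simp [qpochInv, qpoch]

lemma qpochInv_of_neg {u : ℤ} (hu : u < 0) : qpochInv u = 0 :=
  if_neg hu.not_ge

lemma qpochInv_sub_one (u : ℤ) : qpochInv (u - 1) = (1 - q ^ u) * qpochInv u := by
  rcases lt_trichotomy u 0 with hu | rfl | hu
  · rw [qpochInv_of_neg hu, qpochInv_of_neg (by omega), mul_zero]
  · rw [qpochInv_of_neg (by omega)]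
    simp
  · obtain ⟨n, rfl⟩ : ∃ n : ℕ, u = (n + 1 : ℕ) := ⟨(u - 1).toNat, by omega⟩
    have h : ((n + 1 : ℕ) : ℤ) - 1 = n := by push_cast; ring
    rw [h, qpochInv_natCast, qpochInv_natCast, qpoch_succ, zpow_natCast]
    have := one_sub_q_pow_ne_zero n
    have := qpoch_ne_zero n
    field_simp

lemma qbinom_eq_qpoch_mul (N : ℕ) (K : ℤ) :
    qbinom N K = qpoch N * qpochInv K * qpochInv (N - K) := by
  by_cases h : 0 ≤ K ∧ K ≤ N
  · obtain ⟨k, rfl⟩ := Int.eq_ofNat_of_zero_le h.1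
    obtain ⟨l, rfl⟩ := Nat.exists_eq_add_of_le (show k ≤ N by omega)
    have hl : ((k + l : ℕ) : ℤ) - k = l := by push_cast; ring
    rw [qbinom, if_pos h, hl]
    simp only [Int.toNat_natCast, qpochInv_natCast, qfact_eq_qpoch_div, pow_add]
    have hq : (1 : RatFunc ℚ) - q ≠ 0 := by simpa using one_sub_q_pow_ne_zero 0
    have := qpoch_ne_zero k
    have := qpoch_ne_zero l
    field_simp
  · rw [qbinom, if_neg h]
    by_cases hK : 0 ≤ K
    · rw [qpochInv_of_neg (show (N : ℤ) - K < 0 by omega), mul_zero]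
    · rw [qpochInv_of_neg (not_le.mp hK), mul_zero, zero_mul]

/-- The summand `q^{t(t+c)} / ((q;q)_t (q;q)_{t+c} (q;q)_{a-t} (q;q)_{b-t})` of the
`q`-Vandermonde sum. -/
def vandermondeTerm (a b c t : ℤ) : RatFunc ℚ :=
  q ^ (t * (t + c)) * qpochInv t * qpochInv (t + c) * qpochInv (a - t) * qpochInv (b - t)

lemma vandermondeTerm_eq_zero_of_lt_left {a b c t : ℤ} (h : a < t) :
    vandermondeTerm a b c t = 0 := by
  simp [vandermondeTerm, qpochInv_of_neg (sub_neg.mpr h)]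

lemma vandermondeTerm_eq_zero_of_lt_right {a b c t : ℤ} (h : b < t) :
    vandermondeTerm a b c t = 0 := by
  simp [vandermondeTerm, qpochInv_of_neg (sub_neg.mpr h)]

lemma vandermondeTerm_eq_zero_of_neg {a b c t : ℤ} (h : t < 0) :
    vandermondeTerm a b c t = 0 := by
  simp [vandermondeTerm, qpochInv_of_neg h]

lemma one_sub_mul_vandermondeTerm (a b c t : ℤ) :
    (1 - q ^ b) * vandermondeTerm a b c t =
      vandermondeTerm a (b - 1) c t +
        q ^ (b + c) * vandermondeTerm (a - 1) (b - 1) (c + 1) (t - 1) := by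
  have hb : b - 1 - t = b - t - 1 := by ring
  have hc : t - 1 + (c + 1) = t + c := by ring
  have ha : a - 1 - (t - 1) = a - t := by ring
  have hb' : b - 1 - (t - 1) = b - t := by ring
  have hexp : q ^ (b + c) * q ^ ((t - 1) * (t + c)) = q ^ (t * (t + c)) * q ^ (b - t) := by
    rw [← zpow_add₀ q_ne_zero, ← zpow_add₀ q_ne_zero]
    congr 1
    ring
  have hq : q ^ b = q ^ (b - t) * q ^ t := by
    rw [← zpow_add₀ q_ne_zero, sub_add_cancel]
  simp only [vandermondeTerm, hb, hc, ha, hb', qpochInv_sub_one, hq]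
  linear_combination
    (-(1 - q ^ t) * qpochInv t * qpochInv (t + c) * qpochInv (a - t) * qpochInv (b - t)) * hexp

/-- The `q`-Vandermonde identity in reciprocal form. -/
lemma sum_vandermondeTerm_range (m b : ℕ) (a : ℤ) :
    ∑ t ∈ range (b + 1), vandermondeTerm a b (m - a) t =
      qpoch (m + b) * qpochInv m * qpochInv b * qpochInv (b + m - a) * qpochInv a := by
  induction b generalizing a with
  | zero =>
    have := qpoch_ne_zero m
    simp only [zero_add, sum_range_one, vandermondeTerm, Nat.cast_zero, zero_mul, zpow_zero,
      sub_zero, qpochInv_zero, add_zero, qpochInv_natCast]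
    field_simp
    simp [qpoch]
  | succ b ih =>
    have hb : ((b + 1 : ℕ) : ℤ) - 1 = b := by push_cast; ring
    have hne : 1 - q ^ ((b + 1 : ℕ) : ℤ) ≠ 0 := by
      rw [zpow_natCast]
      exact one_sub_q_pow_ne_zero b
    apply mul_left_cancel₀ hne
    have hfst : ∑ t ∈ range (b + 1 + 1), vandermondeTerm a b (m - a) t =
        ∑ t ∈ range (b + 1), vandermondeTerm a b (m - a) t := by
      rw [sum_range_succ, vandermondeTerm_eq_zero_of_lt_right (by push_cast; omega), add_zero]
    have hsnd : ∑ t ∈ range (b + 1 + 1), vandermondeTerm (a - 1) b (m - a + 1) ((t : ℤ) - 1) =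
        ∑ t ∈ range (b + 1), vandermondeTerm (a - 1) b (m - (a - 1)) t := by
      rw [sum_range_succ', vandermondeTerm_eq_zero_of_neg (by simp), add_zero]
      refine sum_congr rfl fun t _ => ?_
      congr 1 <;> push_cast <;> ring
    rw [mul_sum]
    simp only [one_sub_mul_vandermondeTerm, hb]
    rw [sum_add_distrib, ← mul_sum, hfst, hsnd, ih, ih]
    have hqb : qpochInv (b : ℤ) = (1 - q ^ ((b + 1 : ℕ) : ℤ)) * qpochInv ((b + 1 : ℕ) : ℤ) := by
      rw [← qpochInv_sub_one, hb]
    have hbm : (b : ℤ) + m - a = ((b + 1 : ℕ) + m - a) - 1 := by push_cast; ring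
    have hbm' : (b : ℤ) + m - (a - 1) = (b + 1 : ℕ) + m - a := by push_cast; ring
    have hexp : ((b + 1 : ℕ) : ℤ) + (m - a) = (b + 1 : ℕ) + m - a := by ring
    have hpow : q ^ (m + b + 1) = q ^ (((b + 1 : ℕ) : ℤ) + m - a) * q ^ a := by
      rw [← zpow_add₀ q_ne_zero, ← zpow_natCast]
      congr 1
      push_cast
      ring
    rw [← add_assoc m b 1, qpoch_succ, hpow, hqb, hbm', hbm, qpochInv_sub_one,
      qpochInv_sub_one, hexp]
    ring

lemma sum_vandermondeTerm_Icc (a b c : ℤ) (N : ℕ) (hN : a + b + c = N) :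
    ∑ t ∈ Icc 0 a, vandermondeTerm a b c t =
      qpoch N * qpochInv (a + c) * qpochInv b * qpochInv (b + c) * qpochInv a := by
  rcases lt_or_ge b 0 with hb | hb
  · rw [qpochInv_of_neg hb, sum_eq_zero fun t ht =>
      vandermondeTerm_eq_zero_of_lt_right (by have := mem_Icc.mp ht; omega)]
    ring
  rcases lt_or_ge (a + c) 0 with hac | hac
  · rw [qpochInv_of_neg hac, sum_eq_zero fun t ht => ?_]
    · ring
    · have := mem_Icc.mp ht
      simp [vandermondeTerm, qpochInv_of_neg (show t + c < 0 by omega)]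
  lift b to ℕ using hb
  obtain ⟨m, hm⟩ := Int.eq_ofNat_of_zero_le hac
  obtain rfl : c = m - a := by omega
  obtain rfl : N = m + b := by omega
  have hIcc : ∑ t ∈ Icc 0 a, vandermondeTerm a b (m - a) t =
      ∑ t ∈ range (b + 1), vandermondeTerm a b (m - a) t := by
    symm
    refine sum_bij_ne_zero (fun (t : ℕ) _ _ => (t : ℤ)) ?_ ?_ ?_ ?_
    · intro t _ ht
      refine mem_Icc.mpr ⟨by positivity, ?_⟩
      by_contra! h
      exact ht (vandermondeTerm_eq_zero_of_lt_left h)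
    · intro s _ _ t _ _ h
      exact_mod_cast h
    · intro t ht h0
      have h := mem_Icc.mp ht
      have htb : t ≤ b := by
        by_contra! h
        exact h0 (vandermondeTerm_eq_zero_of_lt_right h)
      have hcast : (t.toNat : ℤ) = t := Int.toNat_of_nonneg h.1
      exact ⟨t.toNat, mem_range.mpr (by omega), by rwa [hcast], hcast⟩
    · intros
      rfl
  rw [hIcc, sum_vandermondeTerm_range, hm, add_sub_assoc]

/-- For all nonnegative integers `m₁, m₂` and every integer `k`,
`[m₁+m₂+1 choose m₁+k] [m₁+m₂+1 choose m₂+k]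
  = Σ_{t=0}^{m₁-k+1} q^{t²+2kt-t} (q;q)_{m₁+m₂+1} /
      ((q;q)_t (q;q)_{t+2k-1} (q;q)_{m₁-k-t+1} (q;q)_{m₂-k-t+1})`,
where summands with a factor `1/(q;q)_u`, `u < 0`, are interpreted as `0`. -/
theorem product_identity (m₁ m₂ : ℕ) (k : ℤ) :
    qbinom ((m₁ : ℤ) + m₂ + 1) ((m₁ : ℤ) + k) *
        qbinom ((m₁ : ℤ) + m₂ + 1) ((m₂ : ℤ) + k) =
      ∑ t ∈ Finset.Icc (0 : ℤ) ((m₁ : ℤ) - k + 1),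
        q ^ (t ^ 2 + 2 * k * t - t) * qpoch (m₁ + m₂ + 1) *
          qpochInv t * qpochInv (t + 2 * k - 1) *
          qpochInv ((m₁ : ℤ) - k - t + 1) * qpochInv ((m₂ : ℤ) - k - t + 1) := by
  have hN : (m₁ : ℤ) + m₂ + 1 = (m₁ + m₂ + 1 : ℕ) := by push_cast; ring
  have hsum := sum_vandermondeTerm_Icc (m₁ - k + 1) (m₂ - k + 1) (2 * k - 1) (m₁ + m₂ + 1)
    (by push_cast; ring)
  have hterm (t : ℤ) :
      q ^ (t ^ 2 + 2 * k * t - t) * qpoch (m₁ + m₂ + 1) *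
          qpochInv t * qpochInv (t + 2 * k - 1) *
          qpochInv ((m₁ : ℤ) - k - t + 1) * qpochInv ((m₂ : ℤ) - k - t + 1) =
        qpoch (m₁ + m₂ + 1) * vandermondeTerm (m₁ - k + 1) (m₂ - k + 1) (2 * k - 1) t := by
    rw [vandermondeTerm, show t ^ 2 + 2 * k * t - t = t * (t + (2 * k - 1)) by ring,
      show t + 2 * k - 1 = t + (2 * k - 1) by ring,
      show (m₁ : ℤ) - k - t + 1 = m₁ - k + 1 - t by ring,
      show (m₂ : ℤ) - k - t + 1 = m₂ - k + 1 - t by ring]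
    ring
  simp only [hterm]
  rw [← mul_sum, hsum, hN, qbinom_eq_qpoch_mul, qbinom_eq_qpoch_mul,
    show ((m₁ + m₂ + 1 : ℕ) : ℤ) - (m₁ + k) = m₂ - k + 1 by push_cast; ring,
    show ((m₁ + m₂ + 1 : ℕ) : ℤ) - (m₂ + k) = m₁ - k + 1 by push_cast; ring,
    show (m₁ : ℤ) - k + 1 + (2 * k - 1) = m₁ + k by ring,
    show (m₂ : ℤ) - k + 1 + (2 * k - 1) = m₂ + k by ring]
  ring

end
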